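/- With the data (Λ, ⟨·,·⟩, Ṽ), the Lie ring L, and the involution σ of L as in the context, let k be a field of characteristic 0. Then the fixed-point subalgebra 𝔤 = {x ∈ L ⊗_ℤ k : σ(x) = x} is equal to the k-linear span of the elements Z_γ̃ = X_γ̃ + X_{−γ̃^{−1}} for γ̃ ∈ Γ̃. -/

import Mathlib

/-!
Since `2` is invertible in `k`, every vector `x` fixed by `σ` equals
`½ (x + σ x)`, so it suffices to see that the image of `1 + σ` lies in the span of the `Z_γ̃`.
The map `1 + σ` kills `Λ^∨` and sends `X_γ̃` to `X_γ̃ - X_{γ̃⁻¹} = X_γ̃ + X_{-γ̃⁻¹} = Z_γ̃`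
(`add_sigma_mem`). Conversely `σ` exchanges the two summands `X_γ̃` and `X_{-γ̃⁻¹}` of `Z_γ̃`
(`sigma_XX_eq`), so every `Z_γ̃` is fixed. Neither inclusion uses that the `X_γ̃` (up to sign)
are linearly independent.
-/

open scoped TensorProduct Classical

namespace Lurie

variable (Λ : Type) [AddCommGroup Λ]

/-- The subgroup `2Λ ⊆ Λ`, as a `ℤ`-submodule. -/
def twoLambda : Submodule ℤ Λ := LinearMap.range ((2 : ℤ) • (LinearMap.id : Λ →ₗ[ℤ] Λ))

/-- `V = Λ/2Λ`. -/
abbrev ModTwo := Λ ⧸ twoLambda Λ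

/-- The quotient map `Λ → Λ/2Λ`. -/
def mk2 : Λ →ₗ[ℤ] ModTwo Λ := (twoLambda Λ).mkQ

variable (Vt : Type) [Group Vt]
variable (B : Λ →ₗ[ℤ] Λ →ₗ[ℤ] ℤ) (p : Vt → ModTwo Λ) (ε : Vt)

/-- The hypotheses on the data `(Λ, ⟨·,·⟩, Ṽ)`: the bilinear form `B = ⟨·,·⟩` is
symmetric, positive definite and even, and its roots `Γ = {γ | ⟨γ,γ⟩ = 2}` generate `Λ`;
`p : Ṽ → V = Λ/2Λ` is a surjective group homomorphism whose kernel is the central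
subgroup `{1, ε}` of order 2 (so `Ṽ` is a central extension of `V` by `{±1}`, with
`ε` playing the role of `−1`), and every `ṽ ∈ Ṽ` lying over `v ∈ V` satisfies
`ṽ² = (−1)^{q(v)}`, where `q(λ) = ⟨λ,λ⟩/2`. -/
def LurieData : Prop :=
  (∀ x y : Λ, B x y = B y x) ∧
  (∀ x : Λ, x ≠ 0 → 0 < B x x) ∧
  (∀ x : Λ, 2 ∣ B x x) ∧
  Submodule.span ℤ {γ : Λ | B γ γ = 2} = ⊤ ∧
  (∀ a b : Vt, p (a * b) = p a + p b) ∧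
  Function.Surjective p ∧
  (∀ v : Vt, p v = 0 ↔ v = 1 ∨ v = ε) ∧
  (∀ g : Vt, ε * g = g * ε) ∧
  ε ≠ 1 ∧ ε ^ 2 = 1 ∧
  (∀ (v : Vt) (l : Λ), p v = mk2 Λ l → v ^ 2 = ε ^ (B l l / 2))

/-- The set `Γ̃` of elements of the fibre product `Λ̃ = Λ ×_V Ṽ` lying over roots
`γ ∈ Γ` of `Λ` (the group structure of `Λ̃` is componentwise, and is referred to below
via the underlying pairs). -/
def Rt : Type := {x : Λ × Vt // p x.2 = mk2 Λ x.1 ∧ B x.1 x.1 = 2}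

/-- The subgroup of relations `X_{−γ̃} + X_{γ̃}` in the free abelian group on `Γ̃`;
here `−γ̃ = (−1)·γ̃` has underlying pair `(γ, ε·ṽ)` when `γ̃` has underlying pair `(γ, ṽ)`. -/
def negRel : AddSubgroup (FreeAbelianGroup (Rt Λ Vt B p)) :=
  AddSubgroup.closure {z | ∃ a b : Rt Λ Vt B p,
    b.val.1 = a.val.1 ∧ b.val.2 = ε * a.val.2 ∧
    z = FreeAbelianGroup.of a + FreeAbelianGroup.of b}

/-- `L'`: the free abelian group on the symbols `X_γ̃`, `γ̃ ∈ Γ̃`, modulo the relations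
`X_{−γ̃} = −X_γ̃`. -/
abbrev Lp := FreeAbelianGroup (Rt Λ Vt B p) ⧸ negRel Λ Vt B p ε

/-- Lurie's `L = Λ^∨ ⊕ L'`. -/
abbrev LL := Module.Dual ℤ Λ × Lp Λ Vt B p ε

/-- The inclusion `Λ^∨ → L`. -/
def iota (f : Module.Dual ℤ Λ) : LL Λ Vt B p ε := (f, 0)

/-- The generator `X_γ̃ ∈ L` for `γ̃ ∈ Γ̃`. -/
def XX (a : Rt Λ Vt B p) : LL Λ Vt B p ε :=
  (0, QuotientAddGroup.mk (FreeAbelianGroup.of a))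

/-- The defining identities of Lurie's bracket on `L = Λ^∨ ⊕ L'`:
`[λ, λ'] = 0`; `[λ, X_γ̃] = −[X_γ̃, λ] = λ(γ) X_γ̃`; `[X_γ̃, X_γ̃'] = X_{γ̃γ̃'}` if
`γ + γ' ∈ Γ`; `[X_γ̃, X_γ̃'] = ε_{γ̃γ̃'} H_γ` if `γ + γ' = 0` (where
`ε_{γ̃γ̃'} = γ̃γ̃' ∈ {±1}` and `H_γ = ⟨γ,·⟩ ∈ Λ^∨`); and `[X_γ̃, X_γ̃'] = 0` otherwise. -/
def IsLurieBracket (br : LL Λ Vt B p ε →+ LL Λ Vt B p ε →+ LL Λ Vt B p ε) : Prop :=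
  (∀ f g : Module.Dual ℤ Λ, br (iota Λ Vt B p ε f) (iota Λ Vt B p ε g) = 0) ∧
  (∀ (f : Module.Dual ℤ Λ) (a : Rt Λ Vt B p),
    br (iota Λ Vt B p ε f) (XX Λ Vt B p ε a) = f a.val.1 • XX Λ Vt B p ε a) ∧
  (∀ (f : Module.Dual ℤ Λ) (a : Rt Λ Vt B p),
    br (XX Λ Vt B p ε a) (iota Λ Vt B p ε f) = -(f a.val.1 • XX Λ Vt B p ε a)) ∧
  (∀ a b c : Rt Λ Vt B p, c.val.1 = a.val.1 + b.val.1 → c.val.2 = a.val.2 * b.val.2 →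
    br (XX Λ Vt B p ε a) (XX Λ Vt B p ε b) = XX Λ Vt B p ε c) ∧
  (∀ a b : Rt Λ Vt B p, a.val.1 + b.val.1 = 0 →
    br (XX Λ Vt B p ε a) (XX Λ Vt B p ε b) =
      (if a.val.2 * b.val.2 = 1 then (1 : ℤ) else -1) • iota Λ Vt B p ε (B a.val.1)) ∧
  (∀ a b : Rt Λ Vt B p, a.val.1 + b.val.1 ≠ 0 →
    B (a.val.1 + b.val.1) (a.val.1 + b.val.1) ≠ 2 →
    br (XX Λ Vt B p ε a) (XX Λ Vt B p ε b) = 0)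


/-- The defining values of the involution `σ` of `L`: `σ(λ) = −λ` for `λ ∈ Λ^∨` and
`σ(X_γ̃) = −X_{γ̃⁻¹}`; here `γ̃⁻¹` has underlying pair `(−γ, ṽ⁻¹)` when `γ̃` has
underlying pair `(γ, ṽ)`. -/
def IsLurieSigma (σ : LL Λ Vt B p ε →+ LL Λ Vt B p ε) : Prop :=
  (∀ f : Module.Dual ℤ Λ, σ (iota Λ Vt B p ε f) = -iota Λ Vt B p ε f) ∧
  (∀ a b : Rt Λ Vt B p, b.val.1 = -a.val.1 → b.val.2 = a.val.2⁻¹ →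
    σ (XX Λ Vt B p ε a) = -XX Λ Vt B p ε b)

section

variable {Λ Vt B p ε}

/-- The relation `X_{-γ̃} = -X_γ̃` in `L`. -/
lemma XX_neg {a b : Rt Λ Vt B p} (h1 : b.val.1 = a.val.1) (h2 : b.val.2 = ε * a.val.2) :
    XX Λ Vt B p ε b = -XX Λ Vt B p ε a := by
  have h : (QuotientAddGroup.mk (FreeAbelianGroup.of a + FreeAbelianGroup.of b) :
      Lp Λ Vt B p ε) = 0 :=
    (QuotientAddGroup.eq_zero_iff _).2 (AddSubgroup.subset_closure ⟨a, b, h1, h2, rfl⟩)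
  refine eq_neg_of_add_eq_zero_right (Prod.ext ?_ h)
  simp [XX]

/-- `Γ̃` is closed under `γ̃ ↦ γ̃⁻¹`. -/
lemma exists_inv (hdata : LurieData Λ Vt B p ε) (a : Rt Λ Vt B p) :
    ∃ b : Rt Λ Vt B p, b.val.1 = -a.val.1 ∧ b.val.2 = a.val.2⁻¹ := by
  obtain ⟨-, -, -, -, hmul, -, hker, -⟩ := hdata
  refine ⟨⟨(-a.val.1, a.val.2⁻¹), ?_, ?_⟩, rfl, rfl⟩
  · have h : p a.val.2⁻¹ + p a.val.2 = 0 := by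
      rw [← hmul, inv_mul_cancel, (hker 1).2 (Or.inl rfl)]
    rw [map_neg, ← a.2.1]
    exact eq_neg_of_add_eq_zero_left h
  · simpa using a.2.2

/-- `Γ̃` is closed under `γ̃ ↦ -γ̃`. -/
lemma exists_neg (hdata : LurieData Λ Vt B p ε) (a : Rt Λ Vt B p) :
    ∃ b : Rt Λ Vt B p, b.val.1 = a.val.1 ∧ b.val.2 = ε * a.val.2 := by
  obtain ⟨-, -, -, -, hmul, -, hker, -⟩ := hdata
  refine ⟨⟨(a.val.1, ε * a.val.2), ?_, a.2.2⟩, rfl, rfl⟩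
  rw [hmul, (hker ε).2 (Or.inr rfl), zero_add]
  exact a.2.1

/-- `σ(X_γ̃) = X_{-γ̃⁻¹}`. -/
lemma sigma_XX_eq (hdata : LurieData Λ Vt B p ε)
    {σ : LL Λ Vt B p ε →+ LL Λ Vt B p ε} (hσ : IsLurieSigma Λ Vt B p ε σ)
    {a b : Rt Λ Vt B p} (h1 : b.val.1 = -a.val.1) (h2 : b.val.2 = ε * a.val.2⁻¹) :
    σ (XX Λ Vt B p ε a) = XX Λ Vt B p ε b := by
  obtain ⟨c, hc1, hc2⟩ := exists_inv hdata a
  rw [hσ.2 a c hc1 hc2, XX_neg (a := c) (b := b) (by rw [h1, hc1]) (by rw [h2, hc2])]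

/-- The image of `1 + σ` on `L` lies, after extension of scalars to `k`, in any `k`-subspace
containing all the `Z_γ̃`. -/
lemma add_sigma_mem (hdata : LurieData Λ Vt B p ε)
    {σ : LL Λ Vt B p ε →+ LL Λ Vt B p ε} (hσ : IsLurieSigma Λ Vt B p ε σ)
    {k : Type} [Field k] (S : Submodule k (k ⊗[ℤ] LL Λ Vt B p ε))
    (hS : ∀ a b : Rt Λ Vt B p, b.val.1 = -a.val.1 → b.val.2 = ε * a.val.2⁻¹ →
      (1 : k) ⊗ₜ[ℤ] (XX Λ Vt B p ε a + XX Λ Vt B p ε b) ∈ S)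
    (x : LL Λ Vt B p ε) : (1 : k) ⊗ₜ[ℤ] (x + σ x) ∈ S := by
  obtain ⟨f, l⟩ := x
  obtain ⟨l, rfl⟩ := QuotientAddGroup.mk_surjective l
  -- The elements of `L` satisfying the claim form a subgroup, so generators suffice.
  let T : AddSubgroup (LL Λ Vt B p ε) := S.toAddSubgroup.comap
    ((TensorProduct.mk ℤ k (LL Λ Vt B p ε) 1).toAddMonoidHom.comp (AddMonoidHom.id _ + σ))
  have hf : iota Λ Vt B p ε f ∈ T := by
    change (1 : k) ⊗ₜ[ℤ] (iota Λ Vt B p ε f + σ (iota Λ Vt B p ε f)) ∈ S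
    rw [hσ.1, add_neg_cancel, TensorProduct.tmul_zero]
    exact S.zero_mem
  have hX (a : Rt Λ Vt B p) : XX Λ Vt B p ε a ∈ T := by
    change (1 : k) ⊗ₜ[ℤ] (XX Λ Vt B p ε a + σ (XX Λ Vt B p ε a)) ∈ S
    obtain ⟨c, hc1, hc2⟩ := exists_inv hdata a
    obtain ⟨b, hb1, hb2⟩ := exists_neg hdata c
    rw [hc1] at hb1
    rw [hc2] at hb2
    rw [sigma_XX_eq hdata hσ hb1 hb2]
    exact hS a b hb1 hb2
  let j : FreeAbelianGroup (Rt Λ Vt B p) →+ LL Λ Vt B p ε :=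
    (AddMonoidHom.inr _ _).comp (QuotientAddGroup.mk' (negRel Λ Vt B p ε))
  have hl : j l ∈ T := by
    induction l using FreeAbelianGroup.induction_on with
    | zero => rw [map_zero]; exact T.zero_mem
    | of a => exact hX a
    | neg a _ => rw [map_neg]; exact T.neg_mem (hX a)
    | add y z hy hz => rw [map_add]; exact T.add_mem hy hz
  have hsum : ((f, QuotientAddGroup.mk l) : LL Λ Vt B p ε) = iota Λ Vt B p ε f + j l :=
    Prod.ext (add_zero f).symm (zero_add _).symm
  rw [hsum]
  exact T.add_mem hf hl

end

/-- For a field `k` of characteristic `0`, the fixed-point subalgebra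
`𝔤 = {x ∈ L ⊗_ℤ k : σ(x) = x}` equals the `k`-linear span of the elements
`Z_γ̃ = X_γ̃ + X_{−γ̃⁻¹}`, `γ̃ ∈ Γ̃`; here `−γ̃⁻¹` has underlying pair `(−γ, ε·ṽ⁻¹)`
when `γ̃` has underlying pair `(γ, ṽ)`, and `σk` denotes the `k`-linear extension of
`σ` to `L ⊗_ℤ k`. -/
theorem fixedSubalgebra_eq_span_Z
    (Λ : Type) [AddCommGroup Λ] [Module.Free ℤ Λ] [Module.Finite ℤ Λ]
    (Vt : Type) [Group Vt]
    (B : Λ →ₗ[ℤ] Λ →ₗ[ℤ] ℤ) (p : Vt → ModTwo Λ) (ε : Vt)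
    (hdata : LurieData Λ Vt B p ε)
    (σ : LL Λ Vt B p ε →+ LL Λ Vt B p ε) (hσ : IsLurieSigma Λ Vt B p ε σ)
    (k : Type) [Field k] [CharZero k]
    (σk : (k ⊗[ℤ] LL Λ Vt B p ε) →ₗ[k] (k ⊗[ℤ] LL Λ Vt B p ε))
    (hext : ∀ x : LL Λ Vt B p ε, σk ((1 : k) ⊗ₜ[ℤ] x) = (1 : k) ⊗ₜ[ℤ] σ x) :
    ∀ x : k ⊗[ℤ] LL Λ Vt B p ε, σk x = x ↔
      x ∈ Submodule.span k {z : k ⊗[ℤ] LL Λ Vt B p ε | ∃ a b : Rt Λ Vt B p,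
        b.val.1 = -a.val.1 ∧ b.val.2 = ε * a.val.2⁻¹ ∧
        z = (1 : k) ⊗ₜ[ℤ] (XX Λ Vt B p ε a + XX Λ Vt B p ε b)} := by
  set S := Submodule.span k {z : k ⊗[ℤ] LL Λ Vt B p ε | ∃ a b : Rt Λ Vt B p,
        b.val.1 = -a.val.1 ∧ b.val.2 = ε * a.val.2⁻¹ ∧
        z = (1 : k) ⊗ₜ[ℤ] (XX Λ Vt B p ε a + XX Λ Vt B p ε b)} with hSdef
  have hadd : ∀ x : k ⊗[ℤ] LL Λ Vt B p ε, x + σk x ∈ S := by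
    intro x
    induction x using TensorProduct.induction_on with
    | zero => rw [map_zero, add_zero]; exact S.zero_mem
    | tmul c y =>
      have hc : c ⊗ₜ[ℤ] y = c • ((1 : k) ⊗ₜ[ℤ] y) := by
        rw [TensorProduct.smul_tmul', smul_eq_mul, mul_one]
      rw [hc, map_smul, hext, ← smul_add, ← TensorProduct.tmul_add]
      exact S.smul_mem c (add_sigma_mem hdata hσ S
        (fun a b h1 h2 => Submodule.subset_span ⟨a, b, h1, h2, rfl⟩) y)
    | add y z hy hz =>
      rw [map_add, add_add_add_comm]
      exact S.add_mem hy hz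
  intro x
  constructor
  · intro hx
    have h := S.smul_mem (2⁻¹ : k) (hadd x)
    rwa [hx, ← two_smul k x, smul_smul, inv_mul_cancel₀ two_ne_zero, one_smul] at h
  · intro hx
    induction hx using Submodule.span_induction with
    | zero => exact map_zero σk
    | add y z _ _ hy hz => rw [map_add, hy, hz]
    | smul c y _ hy => rw [map_smul, hy]
    | mem z hz =>
      obtain ⟨a, b, h1, h2, rfl⟩ := hz
      have hcomm : ∀ g : Vt, ε * g = g * ε := hdata.2.2.2.2.2.2.2.1
      -- `γ̃ ↦ -γ̃⁻¹` is an involution because `ε` is central.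
      have h3 : a.val.2 = ε * b.val.2⁻¹ := by
        rw [h2, mul_inv_rev, inv_inv, hcomm, inv_mul_cancel_right]
      rw [hext, map_add, sigma_XX_eq hdata hσ h1 h2,
        sigma_XX_eq hdata hσ (a := b) (b := a) (by rw [h1, neg_neg]) h3, add_comm]

end Lurie
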